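/- Let w ∈ P_A and let i ≠ j be indices in {1,…,d}. Let α be the multi-index with α_i = 1, α_j = 2, and α_k = 1 for all k ∉ {i,j}; then ∂^α w belongs to span{1, x_j}. Let β be the multi-index with β_i = 1, β_j = 3, and β_k = 1 for all k ∉ {i,j}; then ∂^β w is a constant polynomial. -/

import Mathlib

open MvPolynomial MeasureTheory

/-- `Q₁`: the span of the monomials `x^α` with `α i ≤ 1` for every `i`. -/
noncomputable def Q1 (d : ℕ) : Submodule ℝ (MvPolynomial (Fin d) ℝ) :=
  Submodule.span ℝ {p | ∃ α : Fin d →₀ ℕ, (∀ i, α i ≤ 1) ∧ p = monomial α (1 : ℝ)}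

/-- The Adini shape function space `P_A = Q₁ + span{x_i² q : 1 ≤ i ≤ d, q ∈ Q₁}`. -/
noncomputable def PA (d : ℕ) : Submodule ℝ (MvPolynomial (Fin d) ℝ) :=
  Q1 d ⊔ Submodule.span ℝ {p | ∃ i : Fin d, ∃ q ∈ Q1 d, p = X i ^ 2 * q}

/-- `Q₁^i`: elements of `Q₁` of degree 0 in `x_i`. -/
noncomputable def Q1i (d : ℕ) (i : Fin d) : Submodule ℝ (MvPolynomial (Fin d) ℝ) :=
  Submodule.span ℝ
    {p | ∃ α : Fin d →₀ ℕ, (∀ j, α j ≤ 1) ∧ α i = 0 ∧ p = monomial α (1 : ℝ)}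

/-- `S^i = span{((x_j − c_j)² − h_j²) q̂ : 1 ≤ j ≤ d, q̂ ∈ Q₁^i}`. -/
noncomputable def Si (d : ℕ) (c h : Fin d → ℝ) (i : Fin d) :
    Submodule ℝ (MvPolynomial (Fin d) ℝ) :=
  Submodule.span ℝ
    {p | ∃ j : Fin d, ∃ q ∈ Q1i d i, p = ((X j - C (c j)) ^ 2 - C (h j ^ 2)) * q}

/-- The vertices of the `d`-rectangle with centre `c` and half-lengths `h`. -/
def IsVertex {d : ℕ} (c h : Fin d → ℝ) (a : Fin d → ℝ) : Prop :=
  ∀ i, a i = c i - h i ∨ a i = c i + h i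

/-- The `d`-rectangle `K = ∏_i [c_i − h_i, c_i + h_i]`. -/
def box {d : ℕ} (c h : Fin d → ℝ) : Set (Fin d → ℝ) :=
  Set.univ.pi fun i => Set.Icc (c i - h i) (c i + h i)

/-- The iterated partial derivative `∂^α`. -/
noncomputable def pderivPow {d : ℕ} (α : Fin d → ℕ) :
    MvPolynomial (Fin d) ℝ →ₗ[ℝ] MvPolynomial (Fin d) ℝ :=
  (List.ofFn fun i : Fin d =>
    ((pderiv (R := ℝ) i).toLinearMap :
        Module.End ℝ (MvPolynomial (Fin d) ℝ)) ^ α i).prod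

/-!
Every exponent of an element of `P_A` has all entries at most `3` and at most one entry above `1`.
Applying `∂^α` translates exponents by `-α`. If all `α_k ≥ 1` and `α_j ≥ 2`, an exponent `m` of
`∂^α w` has `(m + α)_j ≥ 2`, so `j` is the exceptional index of `m + α`. Hence `m_k = 0` for
`k ≠ j`, and `m_j ≤ 3 - α_j`.
-/

section Support

variable {σ R : Type*} [CommSemiring R] {S : Set (σ →₀ ℕ)} {p : MvPolynomial σ R}

lemma pderiv_mem_restrictSupport (i : σ) (hp : p ∈ restrictSupport R S) :
    pderiv i p ∈ restrictSupport R {m | m + Finsupp.single i 1 ∈ S} := by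
  refine (mem_restrictSupport_iff R).2 fun m hm => (mem_restrictSupport_iff R).1 hp ?_
  simp only [Finset.mem_coe, mem_support_iff, coeff_pderiv] at hm ⊢
  exact left_ne_zero_of_mul hm

lemma pderiv_pow_mem_restrictSupport (i : σ) (n : ℕ) (hp : p ∈ restrictSupport R S) :
    ((pderiv (R := R) i).toLinearMap ^ n : Module.End R (MvPolynomial σ R)) p ∈
      restrictSupport R {m | m + Finsupp.single i n ∈ S} := by
  induction n with
  | zero => simpa using hp
  | succ n ih =>
    rw [pow_succ', Module.End.mul_apply]
    simpa only [Set.mem_ofPred_eq, add_assoc, ← Finsupp.single_add, add_comm 1 n,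
      Derivation.coeFn_coe] using
      pderiv_mem_restrictSupport i ih

lemma list_prod_pderiv_pow_mem_restrictSupport (α : σ → ℕ) (l : List σ)
    (hp : p ∈ restrictSupport R S) :
    (l.map fun i => ((pderiv (R := R) i).toLinearMap ^ α i :
        Module.End R (MvPolynomial σ R))).prod p ∈
      restrictSupport R {m | m + (l.map fun i => Finsupp.single i (α i)).sum ∈ S} := by
  induction l with
  | nil => simpa using hp
  | cons i l ih =>
    simpa only [List.map_cons, List.prod_cons, List.sum_cons, Module.End.mul_apply,
      Set.mem_ofPred_eq, add_assoc] using pderiv_pow_mem_restrictSupport i (α i) ih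

end Support

lemma pderivPow_mem_restrictSupport {d : ℕ} {S : Set (Fin d →₀ ℕ)}
    {p : MvPolynomial (Fin d) ℝ} (α : Fin d → ℕ) (hp : p ∈ restrictSupport ℝ S) :
    pderivPow α p ∈ restrictSupport ℝ {m | m + Finsupp.equivFunOnFinite.symm α ∈ S} := by
  have hsum : ((List.finRange d).map fun i => Finsupp.single i (α i)).sum =
      Finsupp.equivFunOnFinite.symm α := by
    rw [← List.ofFn_eq_map, List.sum_ofFn, Finsupp.equivFunOnFinite_symm_eq_sum]
  simpa only [pderivPow, List.ofFn_eq_map, hsum] using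
    list_prod_pderiv_pow_mem_restrictSupport α (List.finRange d) hp

section AdiniExponents

/-- The exponents of the monomials in the Adini space `P_A`: all entries are at most `3` and at most
one of them exceeds `1`. -/
def adiniExponents (σ : Type*) : Set (σ →₀ ℕ) :=
  {m | (∀ k, m k ≤ 3) ∧ {k | 1 < m k}.Subsingleton}

variable {σ : Type*} {m a : σ →₀ ℕ}

lemma mem_adiniExponents_of_le_one (hm : ∀ k, m k ≤ 1) : m ∈ adiniExponents σ :=
  ⟨fun k => (hm k).trans (by norm_num), fun k hk => absurd hk (hm k).not_gt⟩

lemma single_two_add_mem_adiniExponents (i : σ) (hm : ∀ k, m k ≤ 1) :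
    Finsupp.single i 2 + m ∈ adiniExponents σ := by
  classical
  have eq_of_one_lt {k : σ} (hk : 1 < Finsupp.single i 2 k + m k) : k = i := by
    by_contra hne
    rw [Finsupp.single_eq_of_ne hne, zero_add] at hk
    exact (hm k).not_gt hk
  refine ⟨fun k => ?_, fun k hk l hl => (eq_of_one_lt hk).trans (eq_of_one_lt hl).symm⟩
  have single_le_two : Finsupp.single i 2 k ≤ 2 := by
    rw [Finsupp.single_apply]
    split_ifs <;> norm_num
  exact add_le_add single_le_two (hm k)

lemma eq_single_of_add_mem_adiniExponents {j : σ} (hm : m + a ∈ adiniExponents σ)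
    (ha : ∀ k, 1 ≤ a k) (haj : 2 ≤ a j) : m = Finsupp.single j (m j) := by
  refine Finsupp.eq_single_iff.2 ⟨fun k hk => ?_, rfl⟩
  have one_lt_of_ne_zero : 1 < (m + a) k :=
    add_le_add (Nat.one_le_iff_ne_zero.2 (Finsupp.mem_support_iff.1 hk)) (ha k)
  have one_lt_at_j : 1 < (m + a) j := haj.trans (Nat.le_add_left _ _)
  exact Finset.mem_singleton.2 (hm.2 one_lt_of_ne_zero one_lt_at_j)

end AdiniExponents

section AdiniSpace

variable {d : ℕ}

lemma Q1_eq_restrictDegree : Q1 d = restrictDegree (Fin d) ℝ 1 := by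
  rw [Q1, restrictDegree, restrictSupport_eq_span]
  congr 1
  ext p
  simp only [Set.mem_ofPred_eq, Set.mem_image, eq_comm (a := p)]

open scoped Pointwise in
lemma PA_le_restrictSupport : PA d ≤ restrictSupport ℝ (adiniExponents (Fin d)) := by
  rw [PA, Q1_eq_restrictDegree, restrictDegree]
  refine sup_le (restrictSupport_mono ℝ fun m hm => mem_adiniExponents_of_le_one hm)
    (Submodule.span_le.2 ?_)
  rintro _ ⟨i, q, hq, rfl⟩
  have hX : X i ^ 2 ∈ restrictSupport ℝ {Finsupp.single i 2} := by
    simp [X_pow_eq_monomial]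
  have hXq := Submodule.mul_mem_mul hX hq
  rw [← restrictSupport_add] at hXq
  refine restrictSupport_mono ℝ ?_ hXq
  rintro _ ⟨_, rfl, m, hm, rfl⟩
  exact single_two_add_mem_adiniExponents i hm

lemma pderivPow_mem_span_X_pow_of_mem_PA {w : MvPolynomial (Fin d) ℝ} (hw : w ∈ PA d)
    {α : Fin d → ℕ} {j : Fin d} (hα : ∀ k, 1 ≤ α k) (hαj : 2 ≤ α j) :
    pderivPow α w ∈ Submodule.span ℝ ((X j ^ ·) '' {n : ℕ | n + α j ≤ 3}) := by
  have hsupp := pderivPow_mem_restrictSupport α (PA_le_restrictSupport hw)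
  rw [restrictSupport_eq_span] at hsupp
  refine Submodule.span_mono ?_ hsupp
  rintro _ ⟨m, hm, rfl⟩
  refine ⟨m j, hm.1 j, ?_⟩
  have hmj : m = Finsupp.single j (m j) := eq_single_of_add_mem_adiniExponents hm hα hαj
  simp only [X_pow_eq_monomial, ← hmj]

end AdiniSpace

/-- for `w ∈ P_A` and `i ≠ j`, the derivative `∂^α w` with `α_i = 1`,
`α_j = 2`, `α_k = 1` for `k ∉ {i,j}` lies in `span{1, x_j}`, and the derivative
`∂^β w` with `β_i = 1`, `β_j = 3`, `β_k = 1` for `k ∉ {i,j}` is constant. -/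
theorem adini_high_order_derivatives (d : ℕ) (hd : 1 ≤ d)
    (w : MvPolynomial (Fin d) ℝ) (hw : w ∈ PA d) (i j : Fin d) (hij : i ≠ j) :
    pderivPow (fun k => if k = j then 2 else 1) w ∈
      Submodule.span ℝ ({1, X j} : Set (MvPolynomial (Fin d) ℝ)) ∧
    ∃ r : ℝ, pderivPow (fun k => if k = j then 3 else 1) w = C r := by
  constructor
  · have hspan := pderivPow_mem_span_X_pow_of_mem_PA hw (j := j)
      (α := fun k => if k = j then 2 else 1) (fun k => by split_ifs <;> norm_num) (by simp)
    have hexponents : {n : ℕ | n + 2 ≤ 3} = {0, 1} := by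
      ext n
      simp only [Set.mem_ofPred_eq, Set.mem_insert_iff, Set.mem_singleton_iff]
      omega
    simpa only [if_true, hexponents, Set.image_pair, pow_zero, pow_one] using hspan
  · have hspan := pderivPow_mem_span_X_pow_of_mem_PA hw (j := j)
      (α := fun k => if k = j then 3 else 1) (fun k => by split_ifs <;> norm_num) (by simp)
    have hexponents : {n : ℕ | n + 3 ≤ 3} = {0} := by
      ext n
      simp
    simp only [if_true, hexponents, Set.image_singleton, pow_zero] at hspan
    obtain ⟨r, hr⟩ := Submodule.mem_span_singleton.1 hspan
    exact ⟨r, by rw [← hr, smul_eq_C_mul, mul_one]⟩
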